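/- Let (a, F) be a game with ξ := ess inf a > 0, a non-constant (F-a.e.), E := ∫_I a dF finite, and ∫_{a(x)>1} log a(x) dF < ∞, and let n > −ξ. For every u ∈ (ξ + 1/H_ξ, E), the translated game satisfies G̃^{(n)}_{u+n}(t̃^{(n)}_{u+n}) = G̃_u(t̃_u); that is, exp(∫_I log((a(x)−u)·t̃^{(n)}_{u+n}/(u+n) + 1) dF) = exp(∫_I log((a(x)−u)·t̃_u/u + 1) dF), so the maximized pre-growth rate at translated price u+n is independent of n. -/

import Mathlib

/-!
Writing `y = a - u`, both first-order conditions have the form `∫ y / (1 + y p) dF = 0`, with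
`p = t / u` and `p = s / (u + n)` respectively, where `0 < p < 1 / (u - ξ)`. On that range
`p ↦ y / (1 + y p)` is nonincreasing for almost every `x`, and strictly decreasing where `y ≠ 0`.
Since `y` is not a.e. zero, the equation has at most one root (`eq_of_foc`). Hence
`t / u = s / (u + n)`, and the two integrands in the growth rates coincide.
-/

open MeasureTheory Real Set Filter Topology
open scoped Classical

/-- `1/H_ξ` where `H_ξ := ∫ 1/(a x − ess inf a) dF`, with the convention that
`1/H_ξ = 0` when `1/(a − ξ)` is not integrable (in particular when `H_ξ = ∞`). -/
noncomputable def invHxi (μ : MeasureTheory.Measure ℝ) (a : ℝ → ℝ) : ℝ :=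
  if MeasureTheory.Integrable (fun x => (a x - essInf a μ)⁻¹) μ then
    (∫ x, (a x - essInf a μ)⁻¹ ∂μ)⁻¹
  else 0

/-- The pre-growth rate `G̃_u(t) = exp (∫ log (a x · t / u − t + 1) dF)`. -/
noncomputable def preG (μ : MeasureTheory.Measure ℝ) (a : ℝ → ℝ) (u t : ℝ) : ℝ :=
  Real.exp (∫ x, Real.log (a x * t / u - t + 1) ∂μ)

/-- `H := ∫ 1/a dF`. -/
noncomputable def Hh (μ : MeasureTheory.Measure ℝ) (a : ℝ → ℝ) : ℝ :=
  ∫ x, (a x)⁻¹ ∂μ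

/-- A positive real essential infimum is a genuine lower bound: the junk value of `sSup ∅` is `0`,
so positivity forces some a.e. lower bound to exist. -/
lemma ae_essInf_le_of_pos (μ : Measure ℝ) (a : ℝ → ℝ) (h : 0 < essInf a μ) :
    ∀ᵐ x ∂μ, essInf a μ ≤ a x := by
  apply ae_essInf_le
  by_contra hb
  have hempty : {c : ℝ | ∀ᶠ x in ae μ, c ≤ a x} = ∅ := by
    ext c
    simp only [Set.mem_ofPred_eq, Set.mem_empty_iff_false, iff_false]
    intro hc
    exact hb ⟨c, by simpa [Filter.eventually_map] using hc⟩
  have : essInf a μ = 0 := by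
    rw [essInf, Filter.liminf_eq, hempty, Real.sSup_empty]
  linarith

lemma invHxi_nonneg (μ : Measure ℝ) (a : ℝ → ℝ) (h : ∀ᵐ x ∂μ, essInf a μ ≤ a x) :
    0 ≤ invHxi μ a := by
  unfold invHxi
  split_ifs
  · refine inv_nonneg.2 (integral_nonneg_of_ae ?_)
    filter_upwards [h] with x hx
    exact inv_nonneg.2 (sub_nonneg.2 hx)
  · exact le_rfl

/-- `1 + y p` is bounded away from zero when `y ≥ -d` and `0 < p < 1 / d`. -/
lemma denom_lower {y d p : ℝ} (hp : 0 < p) (hy : -d ≤ y) : 1 - d * p ≤ 1 + y * p := by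
  nlinarith [mul_le_mul_of_nonneg_right hy hp.le]

lemma integrable_foc (μ : Measure ℝ) {y : ℝ → ℝ} (hm : Measurable y) (hy : Integrable y μ)
    {d p : ℝ} (hd : ∀ᵐ x ∂μ, -d ≤ y x) (hp : 0 < p) (hpd : d * p < 1) :
    Integrable (fun x => y x / (1 + y x * p)) μ := by
  refine (hy.norm.div_const (1 - d * p)).mono'
    (hm.div (measurable_const.add (hm.mul_const p))).aestronglyMeasurable ?_
  filter_upwards [hd] with x hx
  have h1 := denom_lower hp hx
  have h0 : 0 < 1 - d * p := by linarith
  rw [norm_div, Real.norm_of_nonneg (h0.le.trans h1)]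
  gcongr

/-- Two ordered roots of the first-order condition coincide: the difference of the integrands is
`y² (q - p) / ((1 + y p) (1 + y q)) ≥ 0` with zero integral. -/
lemma eq_of_foc_of_le (μ : Measure ℝ) {y : ℝ → ℝ} (hm : Measurable y) (hy : Integrable y μ)
    (hne : ¬ y =ᵐ[μ] 0) {d p q : ℝ} (hd : ∀ᵐ x ∂μ, -d ≤ y x)
    (hp : 0 < p) (hpd : d * p < 1) (hq : 0 < q) (hqd : d * q < 1)
    (hip : ∫ x, y x / (1 + y x * p) ∂μ = 0) (hiq : ∫ x, y x / (1 + y x * q) ∂μ = 0)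
    (hpq : p ≤ q) : p = q := by
  by_contra hpq'
  have hlt : 0 < q - p := sub_pos.2 (lt_of_le_of_ne hpq hpq')
  have key : ∀ᵐ x ∂μ, 0 < 1 + y x * p ∧ 0 < 1 + y x * q ∧
      y x / (1 + y x * p) - y x / (1 + y x * q)
        = y x ^ 2 * (q - p) / ((1 + y x * p) * (1 + y x * q)) := by
    filter_upwards [hd] with x hx
    have h1 : 0 < 1 + y x * p := by linarith [denom_lower hp hx]
    have h2 : 0 < 1 + y x * q := by linarith [denom_lower hq hx]
    refine ⟨h1, h2, ?_⟩
    rw [div_sub_div _ _ h1.ne' h2.ne']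
    congr 1
    ring
  have Ip := integrable_foc μ hm hy hd hp hpd
  have Iq := integrable_foc μ hm hy hd hq hqd
  have hint : ∫ x, (y x / (1 + y x * p) - y x / (1 + y x * q)) ∂μ = 0 := by
    rw [integral_sub Ip Iq, hip, hiq, sub_zero]
  have hnn : 0 ≤ᵐ[μ] fun x => y x / (1 + y x * p) - y x / (1 + y x * q) := by
    filter_upwards [key] with x ⟨h1, h2, h3⟩
    rw [h3]
    simp only [Pi.zero_apply]
    positivity
  have hz := (integral_eq_zero_iff_of_nonneg_ae hnn (Ip.sub Iq)).1 hint
  apply hne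
  filter_upwards [key, hz] with x ⟨h1, h2, h3⟩ h4
  rw [h3] at h4
  simpa [h1.ne', h2.ne', hlt.ne'] using h4

/-- The first-order condition has at most one root in `(0, 1 / d)`. -/
lemma eq_of_foc (μ : Measure ℝ) {y : ℝ → ℝ} (hm : Measurable y) (hy : Integrable y μ)
    (hne : ¬ y =ᵐ[μ] 0) {d p q : ℝ} (hd : ∀ᵐ x ∂μ, -d ≤ y x)
    (hp : 0 < p) (hpd : d * p < 1) (hq : 0 < q) (hqd : d * q < 1)
    (hip : ∫ x, y x / (1 + y x * p) ∂μ = 0) (hiq : ∫ x, y x / (1 + y x * q) ∂μ = 0) :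
    p = q := by
  rcases le_total p q with h | h
  · exact eq_of_foc_of_le μ hm hy hne hd hp hpd hq hqd hip hiq h
  · exact (eq_of_foc_of_le μ hm hy hne hd hq hqd hp hpd hiq hip h).symm

/-- Dividing the proportion by the price `v` removes `v` from the first-order condition. -/
lemma foc_rescale (μ : Measure ℝ) {y : ℝ → ℝ} {v r : ℝ} (hv : 0 < v)
    (h : ∫ x, y x / (y x * r + v) ∂μ = 0) : ∫ x, y x / (1 + y x * (r / v)) ∂μ = 0 := by
  have : (fun x => y x / (1 + y x * (r / v))) = fun x => v * (y x / (y x * r + v)) := by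
    funext x
    have e : 1 + y x * (r / v) = (y x * r + v) / v := by
      field_simp
      ring
    rw [e, div_div_eq_mul_div]
    ring
  rw [this, integral_const_mul, h, mul_zero]

lemma mul_div_lt_one {d v r : ℝ} (hd : 0 < d) (hv : 0 < v) (h : r < v / d) :
    d * (r / v) < 1 := by
  rw [← mul_div_assoc, div_lt_one hv, mul_comm]
  exact (lt_div_iff₀ hd).1 h

/-- Translation invariance of the maximized pre-growth rate:
`G̃^{(n)}_{u+n}(t̃^{(n)}_{u+n}) = G̃_u(t̃_u)`. -/
theorem stmt12 (μ : Measure ℝ) [IsProbabilityMeasure μ] (a : ℝ → ℝ)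
    (ha : Measurable a)
    (hnc : ¬ ∃ c : ℝ, a =ᵐ[μ] fun _ => c)
    (hxi : 0 < essInf a μ)
    (hE : Integrable a μ)
    (hlog : IntegrableOn (fun x => Real.log (a x)) {x | 1 < a x} μ)
    (n : ℝ) (hn : -essInf a μ < n)
    (u : ℝ) (hu : u ∈ Set.Ioo (essInf a μ + invHxi μ a) (∫ x, a x ∂μ))
    (t s : ℝ)
    (ht : t ∈ Set.Ioo (0 : ℝ) (u / (u - essInf a μ)) ∧
      ∫ x, (a x - u) / ((a x - u) * t + u) ∂μ = 0)
    (hs : s ∈ Set.Ioo (0 : ℝ) ((u + n) / (u - essInf a μ)) ∧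
      ∫ x, (a x - u) / ((a x - u) * s + (u + n)) ∂μ = 0) :
    Real.exp (∫ x, Real.log ((a x - u) * s / (u + n) + 1) ∂μ) =
      Real.exp (∫ x, Real.log ((a x - u) * t / u + 1) ∂μ) := by
  have hae := ae_essInf_le_of_pos μ a hxi
  have hd : 0 < u - essInf a μ := by linarith [invHxi_nonneg μ a hae, hu.1]
  have hu0 : 0 < u := by linarith
  have hun : 0 < u + n := by linarith
  obtain ⟨⟨ht0, ht1⟩, hti⟩ := ht
  obtain ⟨⟨hs0, hs1⟩, hsi⟩ := hs
  have hne : ¬ (fun x => a x - u) =ᵐ[μ] 0 := by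
    intro h
    refine hnc ⟨u, ?_⟩
    filter_upwards [h] with x hx
    exact sub_eq_zero.1 hx
  have hlow : ∀ᵐ x ∂μ, -(u - essInf a μ) ≤ a x - u := by
    filter_upwards [hae] with x hx
    linarith
  have heq : s / (u + n) = t / u :=
    eq_of_foc μ (ha.sub_const u) (hE.sub (integrable_const u)) hne hlow
      (div_pos hs0 hun) (mul_div_lt_one hd hun hs1) (div_pos ht0 hu0) (mul_div_lt_one hd hu0 ht1)
      (foc_rescale μ hun hsi) (foc_rescale μ hu0 hti)
  simp only [mul_div_assoc, heq]
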